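/- Let 0 < α < n, 1 < s < n/α, p ∈ (1,∞), and f ∈ L^p(cap_{α,s}). Then there is C = C(α,s,n,p) > 0 such that ∫ (M_{cap_{α,s}} f)^p d cap_{α,s} ≤ C ∫ |f|^p d cap_{α,s}. -/

import Mathlib

open scoped ENNReal
open Metric Set MeasureTheory

noncomputable section

/-- `ℝⁿ` as Euclidean space. -/
abbrev Rn (n : ℕ) := EuclideanSpace ℝ (Fin n)

/-- The Choquet integral of a nonnegative function `g` with respect to a
(monotone) set function `C`: `∫ g dC := ∫_0^∞ C({g > t}) dt`. -/
noncomputable def choquet {X : Type*} (C : Set X → ℝ≥0∞) (g : X → ℝ≥0∞) : ℝ≥0∞ :=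
  ∫⁻ t in Ioi (0 : ℝ), C {x | ENNReal.ofReal t < g x}

/-- The Choquet integral of `g` restricted to a set `A`. -/
noncomputable def choquetOn {X : Type*} (C : Set X → ℝ≥0∞) (A : Set X) (g : X → ℝ≥0∞) : ℝ≥0∞ :=
  ∫⁻ t in Ioi (0 : ℝ), C {x | x ∈ A ∧ ENNReal.ofReal t < g x}

/-- The `L^∞(C)` norm: `inf {λ > 0 : C({|f| > λ}) = 0}` (formulated in `ℝ≥0∞`). -/
noncomputable def choquetEssSup {X : Type*} (C : Set X → ℝ≥0∞) (f : X → ℝ) : ℝ≥0∞ :=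
  sInf {l : ℝ≥0∞ | C {x | l < ENNReal.ofReal |f x|} = 0}

/-- `C`-quasicontinuity of a function `f`. -/
def QuasiCont {X : Type*} [TopologicalSpace X] (C : Set X → ℝ≥0∞) (f : X → ℝ) : Prop :=
  ∀ ε : ℝ≥0∞, 0 < ε → ∃ U : Set X, IsOpen U ∧ C U < ε ∧ ContinuousOn f Uᶜ

/-- Membership in the capacitary space `L^p(C)`: `C`-quasicontinuous with
finite `p`-th power Choquet integral. -/
def MemChoquetLp {X : Type*} [TopologicalSpace X] (C : Set X → ℝ≥0∞) (p : ℝ) (f : X → ℝ) : Prop :=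
  QuasiCont C f ∧ choquet C (fun x => ENNReal.ofReal |f x| ^ p) < ∞

/-- The constant `γ(α)` in the Riesz kernel `I_α = (1/γ(α)) |x|^{α-n}`. -/
noncomputable def rieszConst (n : ℕ) (α : ℝ) : ℝ :=
  Real.pi ^ ((n : ℝ) / 2) * 2 ^ α * Real.Gamma (α / 2) / Real.Gamma (((n : ℝ) - α) / 2)

/-- The Riesz potential `I_α * φ` of a nonnegative function `φ`. -/
noncomputable def rieszPot (n : ℕ) (α : ℝ) (φ : Rn n → ℝ≥0∞) (x : Rn n) : ℝ≥0∞ :=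
  ∫⁻ y, ENNReal.ofReal ((1 / rieszConst n α) * ‖x - y‖ ^ (α - (n : ℝ))) * φ y

/-- The Riesz capacity `cap_{α,s}(E) = inf {‖φ‖_{L^s}^s : φ ≥ 0, I_α*φ ≥ 1 on E}`. -/
noncomputable def rieszCap (n : ℕ) (α s : ℝ) (E : Set (Rn n)) : ℝ≥0∞ :=
  ⨅ (φ : Rn n → ℝ≥0∞) (_ : ∀ x ∈ E, 1 ≤ rieszPot n α φ x), ∫⁻ y, φ y ^ s

/-- The capacitary maximal function associated to the Riesz capacity:
`M_{cap_{α,s}} g(x) := sup_{r>0} (1/(cap_{α,s}(B(0,1)) r^{n-αs})) ∫_{B(x,r)} g d cap_{α,s}`. -/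
noncomputable def maximalCap (n : ℕ) (α s : ℝ) (g : Rn n → ℝ≥0∞) (x : Rn n) : ℝ≥0∞ :=
  ⨆ (r : ℝ) (_ : 0 < r),
    (rieszCap n α s (ball (0 : Rn n) 1) * ENNReal.ofReal (r ^ ((n : ℝ) - α * s)))⁻¹ *
      choquetOn (rieszCap n α s) (ball x r) g

/-- `Γ_{α,s}(g) := inf {‖φ‖_{L^s}^s : φ ≥ 0, I_α * φ ≥ g everywhere}`. -/
noncomputable def rieszGammaFunc (n : ℕ) (α s : ℝ) (g : Rn n → ℝ≥0∞) : ℝ≥0∞ :=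
  ⨅ (φ : Rn n → ℝ≥0∞) (_ : ∀ x, g x ≤ rieszPot n α φ x), ∫⁻ y, φ y ^ s

lemma rieszCap_le {n : ℕ} {α s : ℝ} {E : Set (Rn n)} (φ : Rn n → ℝ≥0∞)
    (h : ∀ x ∈ E, 1 ≤ rieszPot n α φ x) : rieszCap n α s E ≤ ∫⁻ y, φ y ^ s :=
  iInf₂_le φ h

lemma rieszCap_mono {n : ℕ} {α s : ℝ} {E F : Set (Rn n)} (h : E ⊆ F) :
    rieszCap n α s E ≤ rieszCap n α s F :=
  le_iInf₂ fun φ hφ => rieszCap_le φ fun x hx => hφ x (h hx)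

lemma rieszPot_mono {n : ℕ} {α : ℝ} {φ ψ : Rn n → ℝ≥0∞} (h : φ ≤ ψ) (x : Rn n) :
    rieszPot n α φ x ≤ rieszPot n α ψ x :=
  lintegral_mono fun y => mul_le_mul_right (h y) _

lemma rieszPot_const_mul {n : ℕ} {α : ℝ} {c : ℝ≥0∞} (hc : c ≠ ∞) (φ : Rn n → ℝ≥0∞) (x : Rn n) :
    rieszPot n α (fun y => c * φ y) x = c * rieszPot n α φ x := by
  unfold rieszPot
  rw [← lintegral_const_mul' _ _ hc]
  congr 1
  ext y
  ring

lemma lintegral_const_mul_rpow {n : ℕ} {s : ℝ} (hs : 0 < s) {c : ℝ≥0∞} (hc : c ≠ ∞)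
    (φ : Rn n → ℝ≥0∞) : ∫⁻ y, (c * φ y) ^ s = c ^ s * ∫⁻ y, φ y ^ s := by
  rw [← lintegral_const_mul' _ _ (ENNReal.rpow_ne_top_of_nonneg hs.le hc)]
  congr 1
  ext y
  rw [ENNReal.mul_rpow_of_nonneg _ _ hs.le]

lemma rieszPot_le_of_forall_measurable_le {n : ℕ} {α : ℝ} {φ ψ : Rn n → ℝ≥0∞}
    (h : ∀ η : Rn n → ℝ≥0∞, Measurable η → η ≤ φ → η ≤ᵐ[volume] ψ) (x : Rn n) :
    rieszPot n α φ x ≤ rieszPot n α ψ x := by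
  unfold rieszPot
  set k : Rn n → ℝ≥0∞ := fun y =>
    ENNReal.ofReal ((1 / rieszConst n α) * ‖x - y‖ ^ (α - (n : ℝ))) with hk
  have hkm : Measurable k := by
    rw [hk]; fun_prop
  have hktop : ∀ y, k y ≠ ∞ := fun y => ENNReal.ofReal_ne_top
  obtain ⟨g, hgm, hg, hgi⟩ := exists_measurable_le_lintegral_eq volume (fun y => k y * φ y)
  change ∫⁻ y, k y * φ y ≤ ∫⁻ y, k y * ψ y
  rw [hgi]
  have hle : (fun y => g y / k y) ≤ φ := fun y => ENNReal.div_le_of_le_mul' (hg y)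
  refine lintegral_mono_ae ?_
  filter_upwards [h _ (hgm.div hkm) hle] with y hy
  have hgy : g y ≤ k y * φ y := hg y
  rcases eq_or_ne (k y) 0 with h0 | h0
  · simpa [h0] using hgy
  · rw [← ENNReal.div_le_iff' h0 (hktop y)]
    exact hy

/-- In the definition of the Riesz capacity one may restrict to measurable densities. -/
lemma exists_measurable_rieszPot_ge {n : ℕ} {α s : ℝ} (hs : 0 < s) (φ : Rn n → ℝ≥0∞)
    (hφ : ∫⁻ y, φ y ^ s ≠ ∞) :
    ∃ ψ : Rn n → ℝ≥0∞, Measurable ψ ∧ ∫⁻ y, ψ y ^ s ≤ ∫⁻ y, φ y ^ s ∧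
      ∀ x, rieszPot n α φ x ≤ rieszPot n α ψ x := by
  obtain ⟨g, hgm, hg, hgi⟩ := exists_measurable_le_lintegral_eq volume (fun y => φ y ^ s)
  have hgs : ∀ y, (g y ^ s⁻¹) ^ s = g y := fun y => ENNReal.rpow_inv_rpow hs.ne' _
  refine ⟨fun y => g y ^ s⁻¹, hgm.pow_const _, ?_, ?_⟩
  · simp only [hgs, hgi, le_refl]
  · refine rieszPot_le_of_forall_measurable_le fun η hη hηφ => ?_
    have hmax : ∫⁻ y, max (η y ^ s) (g y) ≤ ∫⁻ y, g y := by
      rw [← hgi]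
      exact lintegral_mono fun y =>
        max_le (ENNReal.rpow_le_rpow (hηφ y) hs.le) (hg y)
    have hae := ae_eq_of_ae_le_of_lintegral_le (μ := volume) (f := g)
      (g := fun y => max (η y ^ s) (g y)) (Filter.Eventually.of_forall fun y => le_max_right _ _)
      (hgi ▸ hφ) ((hη.pow_const s).max hgm).aemeasurable hmax
    filter_upwards [hae] with y hy
    rw [ENNReal.le_rpow_inv_iff hs, hy]
    exact le_max_left _ _

lemma rieszCap_iUnion_le {n : ℕ} {α s : ℝ} (hs : 0 < s) {ι : Type*} [Countable ι]
    (E : ι → Set (Rn n)) : rieszCap n α s (⋃ i, E i) ≤ ∑' i, rieszCap n α s (E i) := by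
  rcases eq_or_ne (∑' i, rieszCap n α s (E i)) ∞ with htop | htop
  · simp [htop]
  refine ENNReal.le_of_forall_pos_le_add fun ε hε _ => ?_
  obtain ⟨ε', hε', hsum⟩ := ENNReal.exists_pos_sum_of_countable'
    (ENNReal.coe_ne_zero.2 hε.ne') ι
  have hex : ∀ i, ∃ ψ : Rn n → ℝ≥0∞, Measurable ψ ∧
      ∫⁻ y, ψ y ^ s ≤ rieszCap n α s (E i) + ε' i ∧ ∀ x ∈ E i, 1 ≤ rieszPot n α ψ x := by
    intro i
    have hlt : rieszCap n α s (E i) < rieszCap n α s (E i) + ε' i :=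
      ENNReal.lt_add_right (ENNReal.ne_top_of_tsum_ne_top htop i) (hε' i).ne'
    obtain ⟨φ, hφ⟩ := iInf_lt_iff.1 hlt
    obtain ⟨hφ1, hφ2⟩ := iInf_lt_iff.1 hφ
    obtain ⟨ψ, hψ, hψi, hψp⟩ := exists_measurable_rieszPot_ge (α := α) hs φ hφ2.ne_top
    exact ⟨ψ, hψ, hψi.trans hφ2.le, fun x hx => (hφ1 x hx).trans (hψp x)⟩
  choose ψ hψm hψi hψp using hex
  have hs' : ∀ y, (⨆ i, ψ i y) ^ s ≤ ∑' i, ψ i y ^ s := by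
    intro y
    rw [← ENNReal.le_rpow_inv_iff hs]
    refine iSup_le fun i => ?_
    rw [ENNReal.le_rpow_inv_iff hs]
    exact ENNReal.le_tsum (f := fun i => ψ i y ^ s) i
  calc rieszCap n α s (⋃ i, E i) ≤ ∫⁻ y, (⨆ i, ψ i y) ^ s := by
        refine rieszCap_le _ fun x hx => ?_
        obtain ⟨i, hi⟩ := mem_iUnion.1 hx
        exact (hψp i x hi).trans
          (rieszPot_mono (ψ := fun y => ⨆ i, ψ i y) (fun y => le_iSup (fun i => ψ i y) i) x)
    _ ≤ ∫⁻ y, ∑' i, ψ i y ^ s := lintegral_mono hs'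
    _ = ∑' i, ∫⁻ y, ψ i y ^ s := lintegral_tsum fun i => ((hψm i).pow_const s).aemeasurable
    _ ≤ ∑' i, (rieszCap n α s (E i) + ε' i) := ENNReal.tsum_le_tsum hψi
    _ = ∑' i, rieszCap n α s (E i) + ∑' i, ε' i := ENNReal.tsum_add
    _ ≤ _ := by gcongr

lemma rieszCap_union_le {n : ℕ} {α s : ℝ} (hs : 0 < s) (E F : Set (Rn n)) :
    rieszCap n α s (E ∪ F) ≤ rieszCap n α s E + rieszCap n α s F := by
  have h := rieszCap_iUnion_le (α := α) hs (fun b : Bool => cond b E F)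
  rwa [← union_eq_iUnion, tsum_bool, add_comm] at h

lemma rieszCap_ball_one_le {n : ℕ} {α s : ℝ} (x : Rn n) :
    rieszCap n α s (ball x 1) ≤ rieszCap n α s (ball 0 1) := by
  refine le_iInf₂ fun φ hφ => ?_
  rw [← lintegral_sub_right_eq_self _ x]
  refine rieszCap_le (fun y => φ (y - x)) fun z hz => ?_
  have hz' : z - x ∈ ball (0 : Rn n) 1 := by
    simpa [dist_eq_norm] using hz
  refine (hφ _ hz').trans_eq ?_
  unfold rieszPot
  rw [← lintegral_sub_right_eq_self _ x]
  simp only [sub_sub_sub_cancel_right]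

lemma rieszCap_eq_zero_of_ball {n : ℕ} {α s : ℝ} (hs : 0 < s)
    (h : rieszCap n α s (ball 0 1) = 0) (E : Set (Rn n)) : rieszCap n α s E = 0 := by
  have hcov : E ⊆ ⋃ i : ℕ, ball (TopologicalSpace.denseSeq (Rn n) i) 1 := by
    intro x _
    obtain ⟨i, hi⟩ := (TopologicalSpace.denseRange_denseSeq (Rn n)).exists_dist_lt x one_pos
    exact mem_iUnion.2 ⟨i, hi⟩
  have h1 := (rieszCap_mono (α := α) (s := s) hcov).trans (rieszCap_iUnion_le hs _)
  have h0 : ∀ i : ℕ, rieszCap n α s (ball (TopologicalSpace.denseSeq (Rn n) i) 1) = 0 :=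
    fun i => le_antisymm ((rieszCap_ball_one_le _).trans h.le) bot_le
  simpa [h0] using h1

/-- Weak-type estimate for the Riesz potential. -/
lemma rieszCap_superlevel_le {n : ℕ} {α s : ℝ} (hs : 0 < s) {c : ℝ≥0∞} (hc0 : c ≠ 0)
    (hc : c ≠ ∞) (φ : Rn n → ℝ≥0∞) :
    rieszCap n α s {x | c ≤ rieszPot n α φ x} ≤ c⁻¹ ^ s * ∫⁻ y, φ y ^ s := by
  rw [← lintegral_const_mul_rpow hs (ENNReal.inv_ne_top.2 hc0)]
  refine rieszCap_le _ fun x hx => ?_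
  rw [rieszPot_const_mul (ENNReal.inv_ne_top.2 hc0), ← ENNReal.inv_mul_cancel hc0 hc]
  exact mul_le_mul_right hx _

lemma rieszConst_pos {n : ℕ} {α : ℝ} (hα0 : 0 < α) (hαn : α < n) : 0 < rieszConst n α := by
  unfold rieszConst
  have h1 := Real.Gamma_pos_of_pos (half_pos hα0)
  have h2 := Real.Gamma_pos_of_pos (half_pos (sub_pos.2 hαn))
  positivity

lemma exists_rieszCap_ball_le {n : ℕ} {α s : ℝ} (hα0 : 0 < α) (hαn : α < n) (hs : 0 < s) :
    ∃ A : ℝ≥0∞, A ≠ ∞ ∧ ∀ (x : Rn n) (r : ℝ), 0 < r →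
      rieszCap n α s (ball x r) ≤ A * ENNReal.ofReal (r ^ ((n : ℝ) - α * s)) := by
  have hn : 0 < n := by
    have := hα0.trans hαn
    exact_mod_cast this
  have : Nonempty (Fin n) := ⟨⟨0, hn⟩⟩
  have hγ := rieszConst_pos hα0 hαn
  set V := volume (ball (0 : Rn n) 1) with hV
  have hV0 : V ≠ 0 := (measure_ball_pos _ _ one_pos).ne'
  have hVt : V ≠ ∞ := measure_ball_lt_top.ne
  set D : ℝ := (1 / rieszConst n α) * 2 ^ (α - (n : ℝ)) with hD
  have hDpos : 0 < D := by positivity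
  have hD0 : ENNReal.ofReal D * V ≠ 0 := mul_ne_zero (ENNReal.ofReal_pos.2 hDpos).ne' hV0
  have hDt : ENNReal.ofReal D * V ≠ ∞ := ENNReal.mul_ne_top ENNReal.ofReal_ne_top hVt
  refine ⟨(ENNReal.ofReal D * V)⁻¹ ^ s * V, ENNReal.mul_ne_top
    (ENNReal.rpow_ne_top_of_nonneg hs.le (ENNReal.inv_ne_top.2 hD0)) hVt, fun x r hr => ?_⟩
  have hvol : volume (ball x r) = ENNReal.ofReal (r ^ (n : ℝ)) * V := by
    rw [Measure.addHaar_ball _ _ hr.le, finrank_euclideanSpace_fin, Real.rpow_natCast]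
  have hint : ∫⁻ y, (ball x r).indicator (fun _ => (1 : ℝ≥0∞)) y ^ s
      = ENNReal.ofReal (r ^ (n : ℝ)) * V := by
    rw [← hvol, ← lintegral_indicator_one measurableSet_ball]
    congr 1
    ext y
    by_cases hy : y ∈ ball x r <;> simp [hy, hs]
  have hsub : ball x r ⊆ {z | ENNReal.ofReal (r ^ α) * (ENNReal.ofReal D * V) ≤
      rieszPot n α ((ball x r).indicator fun _ => 1) z} := by
    intro z hz
    have hlow : ∀ y ∈ ball x r, y ≠ z → ENNReal.ofReal (D * r ^ (α - (n : ℝ))) ≤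
        ENNReal.ofReal ((1 / rieszConst n α) * ‖z - y‖ ^ (α - (n : ℝ))) := by
      intro y hy hyz
      apply ENNReal.ofReal_le_ofReal
      have h1 : ‖z - y‖ ≤ 2 * r := by
        rw [← dist_eq_norm]
        have := dist_triangle_right z y x
        rw [mem_ball] at hz hy
        linarith
      have h2 : (2 * r) ^ (α - (n : ℝ)) ≤ ‖z - y‖ ^ (α - (n : ℝ)) :=
        Real.rpow_le_rpow_of_nonpos (norm_pos_iff.2 (sub_ne_zero.2 hyz.symm)) h1 (by linarith)
      rw [Real.mul_rpow (by norm_num) hr.le] at h2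
      rw [hD, mul_assoc]
      gcongr
    calc ENNReal.ofReal (r ^ α) * (ENNReal.ofReal D * V)
        = ENNReal.ofReal (D * r ^ (α - (n : ℝ))) * volume (ball x r) := by
          rw [hvol, ← mul_assoc, ← mul_assoc, ← ENNReal.ofReal_mul (by positivity),
            ← ENNReal.ofReal_mul (by positivity), mul_assoc, ← Real.rpow_add hr]
          congr 2
          rw [sub_add_cancel, mul_comm]
      _ = ∫⁻ y in ball x r, ENNReal.ofReal (D * r ^ (α - (n : ℝ))) := by
          rw [lintegral_const, Measure.restrict_apply_univ]
      _ ≤ ∫⁻ y in ball x r,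
            ENNReal.ofReal ((1 / rieszConst n α) * ‖z - y‖ ^ (α - (n : ℝ))) := by
          refine lintegral_mono_ae ?_
          have hne : ∀ᵐ y ∂(volume.restrict (ball x r)), y ≠ z := by
            refine ae_restrict_of_ae ?_
            have : Nontrivial (Rn n) := inferInstance
            exact compl_mem_ae_iff.2 (measure_singleton z)
          filter_upwards [hne, ae_restrict_mem measurableSet_ball] with y h1 h2
          exact hlow y h2 h1
      _ = rieszPot n α ((ball x r).indicator fun _ => 1) z := by
          unfold rieszPot
          rw [← lintegral_indicator measurableSet_ball]
          congr 1
          ext y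
          by_cases hy : y ∈ ball x r <;> simp [hy]
  have hrα : ENNReal.ofReal (r ^ α) ≠ 0 := (ENNReal.ofReal_pos.2 (by positivity)).ne'
  calc rieszCap n α s (ball x r) ≤ _ := (rieszCap_mono hsub).trans
        (rieszCap_superlevel_le hs (mul_ne_zero hrα hD0)
          (ENNReal.mul_ne_top ENNReal.ofReal_ne_top hDt) _)
    _ = (ENNReal.ofReal D * V)⁻¹ ^ s * V *
        (ENNReal.ofReal (r ^ α) ^ (-s) * ENNReal.ofReal (r ^ (n : ℝ))) := by
        rw [hint, ENNReal.mul_inv (Or.inl hrα) (Or.inl ENNReal.ofReal_ne_top),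
          ENNReal.mul_rpow_of_nonneg _ _ hs.le, ENNReal.inv_rpow, ← ENNReal.rpow_neg]
        ring
    _ = _ := by
        rw [ENNReal.ofReal_rpow_of_pos (by positivity), ← Real.rpow_mul hr.le,
          ← ENNReal.ofReal_mul (by positivity), ← Real.rpow_add hr]
        congr 3
        ring

/-- Capacitary weak-type estimate for the fractional maximal function of an integrable density. -/
lemma rieszCap_fractionalMaximal_le {n : ℕ} {α s : ℝ} (hs : 0 < s) (hd : 0 < (n : ℝ) - α * s)
    {A : ℝ≥0∞} (hA : ∀ (x : Rn n) (r : ℝ), 0 < r →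
      rieszCap n α s (ball x r) ≤ A * ENNReal.ofReal (r ^ ((n : ℝ) - α * s)))
    {F : Rn n → ℝ≥0∞} (hF : ∫⁻ y, F y ≠ ∞) {σ : ℝ≥0∞} (hσ : σ ≠ 0) :
    rieszCap n α s {x | ∃ r : ℝ, 0 < r ∧
        σ * ENNReal.ofReal (r ^ ((n : ℝ) - α * s)) < ∫⁻ y in ball x (2 * r), F y} ≤
      A * ENNReal.ofReal (11 ^ ((n : ℝ) - α * s)) * (σ⁻¹ * ∫⁻ y, F y) := by
  set d : ℝ := (n : ℝ) - α * s
  set S := {x : Rn n | ∃ r : ℝ, 0 < r ∧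
    σ * ENNReal.ofReal (r ^ d) < ∫⁻ y in ball x (2 * r), F y}
  have hex : ∀ x : Rn n, ∃ r : ℝ, x ∈ S → 0 < r ∧
      σ * ENNReal.ofReal (r ^ d) < ∫⁻ y in ball x (2 * r), F y := by
    intro x
    by_cases hx : x ∈ S
    · obtain ⟨r, hr⟩ := hx
      exact ⟨r, fun _ => hr⟩
    · exact ⟨0, fun h => absurd h hx⟩
  choose r hr using hex
  have hrd : ∀ x ∈ S, ENNReal.ofReal (r x ^ d) ≤ σ⁻¹ * ∫⁻ y in ball x (2 * r x), F y := by
    intro x hx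
    rw [mul_comm, ← div_eq_mul_inv, ENNReal.le_div_iff_mul_le (Or.inl hσ)
      (Or.inr ((setLIntegral_le_lintegral _ _).trans_lt hF.lt_top).ne), mul_comm]
    exact (hr x hx).2.le
  have hbdd : ∀ x ∈ S, 2 * r x ≤ 2 * (σ⁻¹ * ∫⁻ y, F y).toReal ^ d⁻¹ := by
    intro x hx
    have hpos := (hr x hx).1
    have h1 : r x ^ d ≤ (σ⁻¹ * ∫⁻ y, F y).toReal := by
      rw [← ENNReal.ofReal_le_iff_le_toReal (ENNReal.mul_ne_top (ENNReal.inv_ne_top.2 hσ) hF)]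
      exact (hrd x hx).trans (mul_le_mul_right (setLIntegral_le_lintegral _ _) _)
    have h2 := (Real.le_rpow_inv_iff_of_pos hpos.le ENNReal.toReal_nonneg hd).2 h1
    linarith
  obtain ⟨u, huS, hudisj, hucov⟩ := Vitali.exists_disjoint_subfamily_covering_enlargement_closedBall
    S id (fun x => 2 * r x) _ hbdd 5 (by norm_num)
  have hballdisj : u.PairwiseDisjoint fun x => ball x (2 * r x) :=
    hudisj.mono_on fun x _ => ball_subset_closedBall
  have hucount : u.Countable := hballdisj.countable_of_isOpen (fun _ _ => isOpen_ball)
    fun x hx => ⟨x, mem_ball_self (by linarith [(hr x (huS hx)).1])⟩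
  have : Countable u := hucount.to_subtype
  have hcov : S ⊆ ⋃ x : u, ball (x : Rn n) (11 * r x) := by
    intro x hx
    obtain ⟨b, hb, hsub⟩ := hucov x hx
    refine mem_iUnion.2 ⟨⟨b, hb⟩, ?_⟩
    have h1 := hsub (mem_closedBall_self (by linarith [(hr x hx).1]))
    have h2 := (hr b (huS hb)).1
    simp only [id, mem_closedBall, mem_ball] at h1 ⊢
    linarith
  calc rieszCap n α s S ≤ ∑' x : u, rieszCap n α s (ball (x : Rn n) (11 * r x)) :=
        (rieszCap_mono hcov).trans (rieszCap_iUnion_le hs _)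
    _ ≤ ∑' x : u, A * ENNReal.ofReal (11 ^ d) *
          (σ⁻¹ * ∫⁻ y in ball (x : Rn n) (2 * r x), F y) := by
        refine ENNReal.tsum_le_tsum fun x => ?_
        have hpos := (hr x (huS x.2)).1
        refine (hA _ _ (by linarith)).trans ?_
        rw [Real.mul_rpow (by norm_num) hpos.le, ENNReal.ofReal_mul (by positivity), ← mul_assoc]
        exact mul_le_mul_right (hrd x (huS x.2)) _
    _ = A * ENNReal.ofReal (11 ^ d) * (σ⁻¹ *
          ∑' x : u, ∫⁻ y in ball (x : Rn n) (2 * r x), F y) := by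
        rw [ENNReal.tsum_mul_left, ENNReal.tsum_mul_left]
    _ ≤ _ := by
        gcongr
        rw [← lintegral_biUnion hucount (fun _ _ => measurableSet_ball) hballdisj]
        exact setLIntegral_le_lintegral _ _

/-- Harnack-type comparison for the part of the potential generated far from a ball. -/
lemma rieszPot_far_le {n : ℕ} {α : ℝ} (hα0 : 0 < α) (hαn : α < n) (φ : Rn n → ℝ≥0∞)
    {x z : Rn n} {r : ℝ} (hz : z ∈ ball x r) :
    ENNReal.ofReal (2 ^ (α - (n : ℝ))) *
      rieszPot n α ((ball x (2 * r))ᶜ.indicator φ) z ≤ rieszPot n α φ x := by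
  have hγ := rieszConst_pos hα0 hαn
  unfold rieszPot
  rw [← lintegral_const_mul' _ _ ENNReal.ofReal_ne_top]
  refine lintegral_mono fun y => ?_
  by_cases hy : y ∈ (ball x (2 * r))ᶜ
  · simp only [indicator_of_mem hy]
    rw [← mul_assoc, ← ENNReal.ofReal_mul (by positivity)]
    refine mul_le_mul_left (ENNReal.ofReal_le_ofReal ?_) _
    rw [mul_left_comm, ← Real.mul_rpow (by norm_num) (norm_nonneg _)]
    rw [mem_compl_iff, mem_ball, not_lt] at hy
    rw [mem_ball] at hz
    have h1 := dist_triangle y z x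
    have h2 := dist_triangle x z y
    rw [dist_comm x z] at h2
    rw [dist_comm y z] at h1
    have hr : 0 < r := dist_nonneg.trans_lt hz
    refine mul_le_mul_of_nonneg_left (Real.rpow_le_rpow_of_nonpos ?_ ?_ (by linarith))
      (by positivity)
    · rw [← dist_eq_norm, dist_comm]
      linarith
    · rw [← dist_eq_norm, ← dist_eq_norm]
      linarith
  · simp [indicator_of_notMem hy]

lemma rieszPot_near_add_far {n : ℕ} {α : ℝ} (φ : Rn n → ℝ≥0∞) {B : Set (Rn n)}
    (hB : MeasurableSet B) (z : Rn n) :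
    rieszPot n α (B.indicator φ) z + rieszPot n α (Bᶜ.indicator φ) z = rieszPot n α φ z := by
  unfold rieszPot
  rw [← lintegral_add_compl
      (fun y => ENNReal.ofReal ((1 / rieszConst n α) * ‖z - y‖ ^ (α - (n : ℝ))) * φ y) hB,
    ← lintegral_indicator hB, ← lintegral_indicator hB.compl]
  simp only [indicator_mul_right]

/-- Restricted weak-type `(1,1)` estimate for the capacitary maximal function. -/
lemma exists_rieszCap_density_le {n : ℕ} {α s : ℝ} (hα0 : 0 < α) (hαn : α < n) (hs : 0 < s)
    (hd : 0 < (n : ℝ) - α * s) :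
    ∃ K : ℝ≥0∞, K ≠ ∞ ∧ ∀ (E : Set (Rn n)) (τ : ℝ≥0∞), τ ≠ 0 → τ ≠ ∞ →
      rieszCap n α s {x | ∃ r : ℝ, 0 < r ∧ τ * ENNReal.ofReal (r ^ ((n : ℝ) - α * s)) <
        rieszCap n α s (E ∩ ball x r)} ≤ K * (1 + τ⁻¹) * rieszCap n α s E := by
  obtain ⟨A, hAt, hA⟩ := exists_rieszCap_ball_le hα0 hαn hs
  set d : ℝ := (n : ℝ) - α * s
  set c : ℝ≥0∞ := ENNReal.ofReal (2 ^ (α - (n : ℝ))) * 2⁻¹ with hc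
  have hc0 : c ≠ 0 := mul_ne_zero (ENNReal.ofReal_pos.2 (by positivity)).ne' (by simp)
  have hct : c ≠ ∞ := ENNReal.mul_ne_top ENNReal.ofReal_ne_top (by simp)
  set L : ℝ≥0∞ := (2 : ℝ≥0∞)⁻¹⁻¹ ^ s with hL
  have hL0 : L ≠ 0 := by simp [hL]
  have hLt : L ≠ ∞ := by simp [hL]
  set K₁ : ℝ≥0∞ := c⁻¹ ^ s
  set K₂ : ℝ≥0∞ := A * ENNReal.ofReal (11 ^ d) * L
  have hK₁ : K₁ ≠ ∞ := ENNReal.rpow_ne_top_of_nonneg hs.le (ENNReal.inv_ne_top.2 hc0)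
  have hK₂ : K₂ ≠ ∞ := ENNReal.mul_ne_top (ENNReal.mul_ne_top hAt ENNReal.ofReal_ne_top) hLt
  refine ⟨1 + K₁ + K₂, by simp [hK₁, hK₂], fun E τ hτ0 hτt => ?_⟩
  have hM0 : (1 + K₁ + K₂) * (1 + τ⁻¹) ≠ 0 := by simp
  have hMt : (1 + K₁ + K₂) * (1 + τ⁻¹) ≠ ∞ :=
    ENNReal.mul_ne_top (by simp [hK₁, hK₂]) (by simp [hτ0])
  rw [← ENNReal.div_le_iff' hM0 hMt]
  refine le_iInf₂ fun φ hφ => ?_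
  rw [ENNReal.div_le_iff' hM0 hMt]
  rcases eq_or_ne (∫⁻ y, φ y ^ s) ∞ with htop | htop
  · simp [htop, ENNReal.mul_top hM0]
  set I := ∫⁻ y, φ y ^ s
  have hsub : {x : Rn n | ∃ r : ℝ, 0 < r ∧ τ * ENNReal.ofReal (r ^ d) <
      rieszCap n α s (E ∩ ball x r)} ⊆ {x | c ≤ rieszPot n α φ x} ∪
      {x | ∃ r : ℝ, 0 < r ∧ L⁻¹ * τ * ENNReal.ofReal (r ^ d) <
        ∫⁻ y in ball x (2 * r), φ y ^ s} := by
    rintro x ⟨r, hr, hx⟩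
    by_cases hfar : ∃ z ∈ E ∩ ball x r,
        2⁻¹ ≤ rieszPot n α ((ball x (2 * r))ᶜ.indicator φ) z
    · obtain ⟨z, hz, hzf⟩ := hfar
      exact Or.inl ((mul_le_mul_right hzf _).trans (rieszPot_far_le hα0 hαn φ hz.2))
    · refine Or.inr ⟨r, hr, ?_⟩
      push Not at hfar
      have hnear : E ∩ ball x r ⊆
          {z | 2⁻¹ ≤ rieszPot n α ((ball x (2 * r)).indicator φ) z} := by
        intro z hz
        by_contra hlt
        simp only [mem_ofPred_eq, not_le] at hlt
        have h1 := hφ z hz.1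
        rw [← rieszPot_near_add_far φ (measurableSet_ball (x := x) (ε := 2 * r)) z] at h1
        have h2 := ENNReal.add_lt_add hlt (hfar z hz)
        rw [ENNReal.inv_two_add_inv_two] at h2
        exact absurd h1 h2.not_ge
      have hcap := (rieszCap_mono hnear).trans
        (rieszCap_superlevel_le (α := α) hs (by simp) (by simp) _)
      have hind : ∫⁻ y, (ball x (2 * r)).indicator φ y ^ s = ∫⁻ y in ball x (2 * r), φ y ^ s := by
        rw [← lintegral_indicator measurableSet_ball]
        congr 1
        ext y
        by_cases hy : y ∈ ball x (2 * r)
        · simp only [indicator_of_mem hy]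
        · simp only [indicator_of_notMem hy, ENNReal.zero_rpow_of_pos hs]
      rw [hind] at hcap
      have h3 := hx.trans_le hcap
      rw [mul_assoc, mul_comm L⁻¹, ← div_eq_mul_inv]
      exact ENNReal.div_lt_of_lt_mul' h3
  calc _ ≤ K₁ * I + K₂ * (τ⁻¹ * I) := by
        refine (rieszCap_mono hsub).trans ((rieszCap_union_le hs _ _).trans
          (add_le_add (rieszCap_superlevel_le hs hc0 hct φ) ?_))
        refine (rieszCap_fractionalMaximal_le hs hd hA htop
          (mul_ne_zero (ENNReal.inv_ne_zero.2 hLt) hτ0)).trans_eq ?_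
        rw [ENNReal.mul_inv (Or.inr hτt) (Or.inr hτ0), inv_inv]
        ring
    _ ≤ (1 + K₁ + K₂) * (1 + τ⁻¹) * I := by
        have : (1 + K₁ + K₂) * (1 + τ⁻¹) * I = K₁ * I + K₂ * (τ⁻¹ * I) +
          (I + τ⁻¹ * I + K₁ * (τ⁻¹ * I) + K₂ * I) := by ring
        rw [this]
        exact le_self_add

lemma lintegral_Ico_le_of_antitone {G : ℝ → ℝ≥0∞} (hG : Antitone G) (a b : ℝ) :
    ∫⁻ t in Ico a b, G t ≤ ENNReal.ofReal (b - a) * G a := by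
  calc ∫⁻ t in Ico a b, G t ≤ ∫⁻ _ in Ico a b, G a :=
        setLIntegral_mono measurable_const fun t ht => hG ht.1
    _ = _ := by rw [setLIntegral_const, Real.volume_Ico, mul_comm]

lemma le_lintegral_Ico_of_antitone {G : ℝ → ℝ≥0∞} (hG : Antitone G) (a b : ℝ) :
    ENNReal.ofReal (b - a) * G b ≤ ∫⁻ t in Ico a b, G t := by
  calc ENNReal.ofReal (b - a) * G b = ∫⁻ _ in Ico a b, G b := by
        rw [setLIntegral_const, Real.volume_Ico, mul_comm]
    _ ≤ _ := setLIntegral_mono hG.measurable fun t ht => hG ht.2.le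

lemma lintegral_Ioi_le_tsum_zpow {G : ℝ → ℝ≥0∞} (hG : Antitone G) {b : ℝ} (hb : 1 < b) :
    ∫⁻ t in Ioi (0 : ℝ), G t ≤
      ENNReal.ofReal (b - 1) * ∑' k : ℤ, ENNReal.ofReal (b ^ k) * G (b ^ k) := by
  have hb0 : 0 < b := one_pos.trans hb
  have hcov : Ioi (0 : ℝ) ⊆ ⋃ k : ℤ, Ico (b ^ k) (b ^ (k + 1)) := fun t ht =>
    mem_iUnion.2 (exists_mem_Ico_zpow ht hb)
  refine (lintegral_mono_set hcov).trans ((lintegral_iUnion_le _ _).trans ?_)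
  rw [← ENNReal.tsum_mul_left]
  refine ENNReal.tsum_le_tsum fun k => (lintegral_Ico_le_of_antitone hG _ _).trans_eq ?_
  rw [← mul_assoc, ← ENNReal.ofReal_mul (by linarith), zpow_add_one₀ hb0.ne']
  congr 2
  ring

lemma tsum_zpow_le_lintegral_Ioi {G : ℝ → ℝ≥0∞} (hG : Antitone G) {b : ℝ} (hb : 1 < b) :
    ENNReal.ofReal (1 - b⁻¹) * ∑' k : ℤ, ENNReal.ofReal (b ^ k) * G (b ^ k) ≤
      ∫⁻ t in Ioi (0 : ℝ), G t := by
  have hb0 : 0 < b := one_pos.trans hb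
  have hmono : Monotone fun k : ℤ => b ^ (k - 1) := fun i j hij =>
    zpow_le_zpow_right₀ hb.le (by omega)
  have hdisj : Pairwise (Function.onFun Disjoint fun k : ℤ => Ico (b ^ (k - 1)) (b ^ k)) := by
    simpa [Order.succ_eq_add_one] using hmono.pairwise_disjoint_on_Ico_succ
  have hsub : ⋃ k : ℤ, Ico (b ^ (k - 1)) (b ^ k) ⊆ Ioi (0 : ℝ) :=
    iUnion_subset fun k t ht => (zpow_pos hb0 _).trans_le ht.1
  refine le_trans ?_ (lintegral_mono_set hsub)
  rw [lintegral_iUnion (fun _ => measurableSet_Ico) hdisj, ← ENNReal.tsum_mul_left]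
  refine ENNReal.tsum_le_tsum fun k => le_trans (le_of_eq ?_) (le_lintegral_Ico_of_antitone hG _ _)
  rw [← mul_assoc, ← ENNReal.ofReal_mul (sub_nonneg.2 (inv_le_one_of_one_le₀ hb.le)),
    zpow_sub_one₀ hb0.ne']
  congr 2
  ring

lemma lintegral_Ioi_le_add_tsum_pow {G : ℝ → ℝ≥0∞} (hG : Antitone G) {M : ℝ≥0∞}
    (hM : ∀ t, G t ≤ M) {a : ℝ} (ha : 0 < a) :
    ∫⁻ t in Ioi (0 : ℝ), G t ≤
      ENNReal.ofReal a * M + ∑' i : ℕ, ENNReal.ofReal (a * 2 ^ i) * G (a * 2 ^ i) := by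
  have hcov : Ioi (0 : ℝ) ⊆ Ico 0 a ∪ ⋃ i : ℕ, Ico (a * 2 ^ i) (a * 2 ^ (i + 1)) := by
    intro t ht
    rcases lt_or_ge t a with h | h
    · exact Or.inl ⟨(mem_Ioi.1 ht).le, h⟩
    · obtain ⟨i, hi1, hi2⟩ := exists_nat_pow_near ((one_le_div ha).2 h) one_lt_two
      rw [le_div_iff₀' ha] at hi1
      rw [div_lt_iff₀' ha] at hi2
      exact Or.inr (mem_iUnion.2 ⟨i, hi1, hi2⟩)
  refine (lintegral_mono_set hcov).trans ((lintegral_union_le _ _ _).trans (add_le_add ?_ ?_))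
  · refine (lintegral_Ico_le_of_antitone hG 0 a).trans ?_
    rw [sub_zero]
    exact mul_le_mul_right (hM 0) _
  · refine (lintegral_iUnion_le _ _).trans (ENNReal.tsum_le_tsum fun i =>
      (lintegral_Ico_le_of_antitone hG _ _).trans_eq ?_)
    congr 2
    ring

lemma antitone_superlevel {X : Type*} {C : Set X → ℝ≥0∞} (hC : Monotone C) (g : X → ℝ≥0∞) :
    Antitone fun t : ℝ => C {x | ENNReal.ofReal t < g x} := fun _ _ hab =>
  hC fun _ hx => (ENNReal.ofReal_le_ofReal hab).trans_lt hx

lemma two_rpow_add (x y : ℝ) : (2 : ℝ≥0∞) ^ (x + y) = 2 ^ x * 2 ^ y :=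
  ENNReal.rpow_add x y (by simp) (by simp)

lemma two_rpow_ne_zero (x : ℝ) : (2 : ℝ≥0∞) ^ x ≠ 0 := by simp

lemma two_rpow_ne_top (x : ℝ) : (2 : ℝ≥0∞) ^ x ≠ ∞ := by simp

lemma ofReal_two_rpow (x : ℝ) : ENNReal.ofReal ((2 : ℝ) ^ x) = (2 : ℝ≥0∞) ^ x := by
  rw [← ENNReal.ofReal_rpow_of_pos two_pos]
  simp

lemma ofReal_two_rpow_zpow (p : ℝ) (k : ℤ) :
    ENNReal.ofReal (((2 : ℝ) ^ p) ^ k) = ((2 : ℝ≥0∞) ^ (k : ℝ)) ^ p := by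
  rw [← Real.rpow_intCast, ← Real.rpow_mul two_pos.le, mul_comm, ofReal_two_rpow,
    ENNReal.rpow_mul]

lemma superlevel_rpow {X : Type*} {p : ℝ} (hp : 0 < p) (g : X → ℝ≥0∞) (k : ℤ) :
    {x | ENNReal.ofReal (((2 : ℝ) ^ p) ^ k) < g x ^ p} = {x | (2 : ℝ≥0∞) ^ (k : ℝ) < g x} := by
  ext x
  simp only [mem_ofPred_eq, ofReal_two_rpow_zpow, ENNReal.rpow_lt_rpow_iff hp]

lemma choquet_rpow_le_tsum {X : Type*} {C : Set X → ℝ≥0∞} (hC : Monotone C) {p : ℝ} (hp : 0 < p)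
    (g : X → ℝ≥0∞) :
    choquet C (fun x => g x ^ p) ≤ ENNReal.ofReal (2 ^ p - 1) *
      ∑' k : ℤ, ((2 : ℝ≥0∞) ^ (k : ℝ)) ^ p * C {x | (2 : ℝ≥0∞) ^ (k : ℝ) < g x} := by
  have h := lintegral_Ioi_le_tsum_zpow (antitone_superlevel hC fun x => g x ^ p)
    (Real.one_lt_rpow one_lt_two hp)
  simp only [superlevel_rpow hp] at h
  simpa only [choquet, ofReal_two_rpow_zpow] using h

lemma tsum_le_choquet_rpow {X : Type*} {C : Set X → ℝ≥0∞} (hC : Monotone C) {p : ℝ} (hp : 0 < p)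
    (g : X → ℝ≥0∞) :
    ENNReal.ofReal (1 - (2 ^ p)⁻¹) *
      ∑' k : ℤ, ((2 : ℝ≥0∞) ^ (k : ℝ)) ^ p * C {x | (2 : ℝ≥0∞) ^ (k : ℝ) < g x} ≤
        choquet C (fun x => g x ^ p) := by
  have h := tsum_zpow_le_lintegral_Ioi (antitone_superlevel hC fun x => g x ^ p)
    (Real.one_lt_rpow one_lt_two hp)
  simp only [superlevel_rpow hp] at h
  simpa only [choquet, ofReal_two_rpow_zpow] using h

/-- If the maximal function exceeds `2 ^ k`, some superlevel set of `g` has large density. -/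
lemma exists_density_of_lt_maximalCap {n : ℕ} {α s : ℝ} {A : ℝ≥0∞}
    (hA : ∀ (x : Rn n) (r : ℝ), 0 < r →
      rieszCap n α s (ball x r) ≤ A * ENNReal.ofReal (r ^ ((n : ℝ) - α * s)))
    (h0 : rieszCap n α s (ball 0 1) ≠ 0) (ht : rieszCap n α s (ball 0 1) ≠ ∞)
    {m : ℕ} (hm : (2 : ℝ≥0∞) ^ (-(m : ℝ)) * A ≤ rieszCap n α s (ball 0 1) / 2)
    {δ : ℝ≥0∞} {ε : ℝ} (hδ : δ * ∑' i : ℕ, ((2 : ℝ≥0∞) ^ (-ε)) ^ i ≤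
      rieszCap n α s (ball 0 1) / 2)
    {g : Rn n → ℝ≥0∞} {k : ℤ} {x : Rn n} (hx : (2 : ℝ≥0∞) ^ (k : ℝ) < maximalCap n α s g x) :
    ∃ i : ℕ, ∃ r : ℝ, 0 < r ∧
      δ * (2 : ℝ≥0∞) ^ ((m : ℝ) - (1 + ε) * i) * ENNReal.ofReal (r ^ ((n : ℝ) - α * s)) <
        rieszCap n α s ({y | (2 : ℝ≥0∞) ^ ((k - m + i : ℤ) : ℝ) < g y} ∩ ball x r) := by
  set c₀ := rieszCap n α s (ball 0 1)
  set d : ℝ := (n : ℝ) - α * s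
  obtain ⟨r, hx⟩ := lt_iSup_iff.1 hx
  obtain ⟨hr, hx⟩ := lt_iSup_iff.1 hx
  have hρ : ENNReal.ofReal (r ^ d) ≠ 0 := (ENNReal.ofReal_pos.2 (by positivity)).ne'
  rw [mul_comm, ← div_eq_mul_inv, ENNReal.lt_div_iff_mul_lt (Or.inl (mul_ne_zero h0 hρ))
    (Or.inl (ENNReal.mul_ne_top ht ENNReal.ofReal_ne_top))] at hx
  by_contra! hcon
  refine hx.not_ge ?_
  set ρ := ENNReal.ofReal (r ^ d)
  have hanti : Antitone fun t : ℝ =>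
      rieszCap n α s {y | y ∈ ball x r ∧ ENNReal.ofReal t < g y} := fun _ _ hab =>
    rieszCap_mono fun _ hy => ⟨hy.1, (ENNReal.ofReal_le_ofReal hab).trans_lt hy.2⟩
  have ha : (0 : ℝ) < 2 ^ ((k : ℝ) - m) := by positivity
  have hpow : ∀ i : ℕ, ENNReal.ofReal ((2 : ℝ) ^ ((k : ℝ) - m) * 2 ^ i) =
      (2 : ℝ≥0∞) ^ ((k - m + i : ℤ) : ℝ) := by
    intro i
    rw [← Real.rpow_natCast, ← Real.rpow_add two_pos, ofReal_two_rpow]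
    push_cast
    rfl
  calc choquetOn (rieszCap n α s) (ball x r) g
      ≤ ENNReal.ofReal (2 ^ ((k : ℝ) - m)) * (A * ρ) +
        ∑' i : ℕ, ENNReal.ofReal ((2 : ℝ) ^ ((k : ℝ) - m) * 2 ^ i) * rieszCap n α s
          {y | y ∈ ball x r ∧ ENNReal.ofReal ((2 : ℝ) ^ ((k : ℝ) - m) * 2 ^ i) < g y} :=
        lintegral_Ioi_le_add_tsum_pow hanti
          (fun t => (rieszCap_mono fun _ hy => hy.1).trans (hA x r hr)) ha
    _ ≤ 2 ^ (k : ℝ) * ρ * (2 ^ (-(m : ℝ)) * A) +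
        ∑' i : ℕ, 2 ^ (k : ℝ) * ρ * (δ * ((2 : ℝ≥0∞) ^ (-ε)) ^ i) := by
        refine add_le_add (le_of_eq ?_) (ENNReal.tsum_le_tsum fun i => ?_)
        · rw [ofReal_two_rpow, sub_eq_add_neg, two_rpow_add]
          ring
        · rw [hpow]
          have hset : {y | y ∈ ball x r ∧ (2 : ℝ≥0∞) ^ ((k - m + i : ℤ) : ℝ) < g y} =
              {y | (2 : ℝ≥0∞) ^ ((k - m + i : ℤ) : ℝ) < g y} ∩ ball x r := by
            ext y
            exact and_comm
          rw [hset]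
          refine (mul_le_mul_right (hcon i r hr) _).trans_eq ?_
          have he : (2 : ℝ≥0∞) ^ ((k - m + i : ℤ) : ℝ) * 2 ^ ((m : ℝ) - (1 + ε) * i) =
              2 ^ (k : ℝ) * ((2 : ℝ≥0∞) ^ (-ε)) ^ i := by
            rw [← two_rpow_add, ← ENNReal.rpow_mul_natCast, ← two_rpow_add]
            congr 1
            push_cast
            ring
          calc _ = (2 : ℝ≥0∞) ^ ((k - m + i : ℤ) : ℝ) * 2 ^ ((m : ℝ) - (1 + ε) * i) * (δ * ρ) := by
                ring
            _ = _ := by rw [he]; ring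
    _ = 2 ^ (k : ℝ) * ρ *
        (2 ^ (-(m : ℝ)) * A + δ * ∑' i : ℕ, ((2 : ℝ≥0∞) ^ (-ε)) ^ i) := by
        rw [ENNReal.tsum_mul_left, ENNReal.tsum_mul_left, mul_add]
    _ ≤ 2 ^ (k : ℝ) * ρ * (c₀ / 2 + c₀ / 2) := by gcongr
    _ = 2 ^ (k : ℝ) * (c₀ * ρ) := by
        rw [ENNReal.add_halves]
        ring

lemma tsum_two_rpow_shift (p : ℝ) (l : ℤ) (a : ℤ → ℝ≥0∞) :
    ∑' k : ℤ, ((2 : ℝ≥0∞) ^ (k : ℝ)) ^ p * a (k + l) =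
      2 ^ (-(l * p)) * ∑' k : ℤ, ((2 : ℝ≥0∞) ^ (k : ℝ)) ^ p * a k := by
  rw [← ENNReal.tsum_mul_left,
    ← (Equiv.addRight l).tsum_eq fun k : ℤ => (2 : ℝ≥0∞) ^ (-(l * p)) * (_ * a k)]
  refine tsum_congr fun k => ?_
  simp only [Equiv.coe_addRight]
  rw [← mul_assoc, ← ENNReal.rpow_mul, ← ENNReal.rpow_mul, ← two_rpow_add]
  congr 2
  push_cast
  ring

lemma tsum_two_rpow_neg_ne_top {x : ℝ} (hx : 0 < x) :
    ∑' i : ℕ, ((2 : ℝ≥0∞) ^ (-x)) ^ i ≠ ∞ := by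
  rw [ENNReal.tsum_geometric]
  refine ENNReal.inv_ne_top.2 (tsub_pos_of_lt ?_).ne'
  exact ENNReal.rpow_lt_one_of_one_lt_of_neg (by norm_num) (by linarith)

lemma exists_choquet_maximalCap_le {n : ℕ} {α s p : ℝ} (hα0 : 0 < α) (hαn : α < n) (hs : 0 < s)
    (hd : 0 < (n : ℝ) - α * s) (hp : 1 < p) :
    ∃ K : ℝ≥0∞, K ≠ ∞ ∧ ∀ g : Rn n → ℝ≥0∞,
      choquet (rieszCap n α s) (fun x => maximalCap n α s g x ^ p) ≤
        K * choquet (rieszCap n α s) (fun x => g x ^ p) := by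
  by_cases h0 : rieszCap n α s (ball 0 1) = 0
  · exact ⟨0, by simp, fun g => by simp [choquet, rieszCap_eq_zero_of_ball hs h0]⟩
  have hp0 : 0 < p := one_pos.trans hp
  have hC : Monotone (rieszCap n α s) := fun _ _ h => rieszCap_mono h
  obtain ⟨A, hAt, hA⟩ := exists_rieszCap_ball_le hα0 hαn hs
  obtain ⟨K, hKt, hK⟩ := exists_rieszCap_density_le hα0 hαn hs hd
  have ht : rieszCap n α s (ball 0 1) ≠ ∞ :=
    ((hA 0 1 one_pos).trans_lt (ENNReal.mul_lt_top hAt.lt_top ENNReal.ofReal_lt_top)).ne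
  set c₀ := rieszCap n α s (ball 0 1)
  have hc2 : c₀ / 2 ≠ 0 := by simp [h0]
  obtain ⟨m, hm⟩ := ENNReal.exists_inv_two_pow_lt (ENNReal.div_pos hc2 hAt).ne'
  have hm' : (2 : ℝ≥0∞) ^ (-(m : ℝ)) * A ≤ c₀ / 2 := by
    rw [ENNReal.rpow_neg, ENNReal.rpow_natCast, ENNReal.inv_pow]
    exact ENNReal.mul_le_of_le_div hm.le
  set ε : ℝ := (p - 1) / 2 with hε
  have hε0 : 0 < ε := by linarith
  set Θ := ∑' i : ℕ, ((2 : ℝ≥0∞) ^ (-ε)) ^ i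
  have hΘ : Θ ≠ ∞ := tsum_two_rpow_neg_ne_top hε0
  set δ := c₀ / 2 / Θ
  have hδ0 : δ ≠ 0 := (ENNReal.div_pos hc2 hΘ).ne'
  have hδΘ : δ * Θ ≤ c₀ / 2 := ENNReal.mul_le_of_le_div le_rfl
  have hΘ0 : Θ ≠ 0 := by
    refine ne_of_gt (lt_of_lt_of_le one_pos ?_)
    exact (pow_zero _).symm.trans_le
      (ENNReal.le_tsum (f := fun i : ℕ => ((2 : ℝ≥0∞) ^ (-ε)) ^ i) 0)
  have hδt : δ ≠ ∞ := ENNReal.div_ne_top (ENNReal.div_ne_top ht (by simp)) hΘ0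
  set τ : ℕ → ℝ≥0∞ := fun i => δ * (2 : ℝ≥0∞) ^ ((m : ℝ) - (1 + ε) * i)
  have hτ0 : ∀ i, τ i ≠ 0 := fun i => mul_ne_zero hδ0 (two_rpow_ne_zero _)
  have hτt : ∀ i, τ i ≠ ∞ := fun i => ENNReal.mul_ne_top hδt (two_rpow_ne_top _)
  set Q := ∑' i : ℕ, K * (1 + (τ i)⁻¹) * 2 ^ (-(((i - m : ℤ) : ℝ) * p)) with hQ
  have hQt : Q ≠ ∞ := by
    have hterm : ∀ i : ℕ, K * (1 + (τ i)⁻¹) * 2 ^ (-(((i - m : ℤ) : ℝ) * p)) =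
        K * 2 ^ (m * p) * ((2 : ℝ≥0∞) ^ (-p)) ^ i +
        K * 2 ^ (m * p) * δ⁻¹ * 2 ^ (-(m : ℝ)) * ((2 : ℝ≥0∞) ^ (-ε)) ^ i := by
      intro i
      have e1 : (2 : ℝ≥0∞) ^ (-(((i - m : ℤ) : ℝ) * p)) =
          2 ^ (m * p) * ((2 : ℝ≥0∞) ^ (-p)) ^ i := by
        rw [← ENNReal.rpow_mul_natCast, ← two_rpow_add]
        congr 1
        push_cast
        ring
      have e2 : (τ i)⁻¹ = δ⁻¹ * 2 ^ ((1 + ε) * i - m) := by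
        rw [ENNReal.mul_inv (Or.inl hδ0) (Or.inl hδt), ← ENNReal.rpow_neg, neg_sub]
      have e3 : (2 : ℝ≥0∞) ^ ((1 + ε) * i - m) * ((2 : ℝ≥0∞) ^ (-p)) ^ i =
          2 ^ (-(m : ℝ)) * ((2 : ℝ≥0∞) ^ (-ε)) ^ i := by
        rw [← ENNReal.rpow_mul_natCast, ← ENNReal.rpow_mul_natCast, ← two_rpow_add,
          ← two_rpow_add]
        congr 1
        rw [hε]
        ring
      calc _ = K * 2 ^ (m * p) * ((2 : ℝ≥0∞) ^ (-p)) ^ i + K * 2 ^ (m * p) * δ⁻¹ *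
            ((2 : ℝ≥0∞) ^ ((1 + ε) * i - m) * ((2 : ℝ≥0∞) ^ (-p)) ^ i) := by
            rw [e1, e2]
            ring
        _ = _ := by
            rw [e3]
            ring
    rw [hQ, tsum_congr hterm, ENNReal.tsum_add, ENNReal.tsum_mul_left, ENNReal.tsum_mul_left]
    have hKm : K * (2 : ℝ≥0∞) ^ ((m : ℝ) * p) ≠ ∞ := ENNReal.mul_ne_top hKt (two_rpow_ne_top _)
    exact ENNReal.add_ne_top.2 ⟨ENNReal.mul_ne_top hKm (tsum_two_rpow_neg_ne_top hp0),
      ENNReal.mul_ne_top (ENNReal.mul_ne_top (ENNReal.mul_ne_top hKm (ENNReal.inv_ne_top.2 hδ0))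
        (two_rpow_ne_top _)) hΘ⟩
  set κ : ℝ≥0∞ := ENNReal.ofReal (1 - (2 ^ p)⁻¹)
  have hκ0 : κ ≠ 0 := (ENNReal.ofReal_pos.2
    (sub_pos.2 (inv_lt_one_of_one_lt₀ (Real.one_lt_rpow one_lt_two hp0)))).ne'
  refine ⟨ENNReal.ofReal (2 ^ p - 1) * (Q * κ⁻¹), ENNReal.mul_ne_top ENNReal.ofReal_ne_top
    (ENNReal.mul_ne_top hQt (ENNReal.inv_ne_top.2 hκ0)), fun g => ?_⟩
  set a : ℤ → ℝ≥0∞ := fun k => rieszCap n α s {y | (2 : ℝ≥0∞) ^ (k : ℝ) < g y}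
  have hlevel : ∀ k : ℤ, rieszCap n α s {x | (2 : ℝ≥0∞) ^ (k : ℝ) < maximalCap n α s g x} ≤
      ∑' i : ℕ, K * (1 + (τ i)⁻¹) * a (k + (i - m)) := by
    intro k
    have hsub : {x | (2 : ℝ≥0∞) ^ (k : ℝ) < maximalCap n α s g x} ⊆
        ⋃ i : ℕ, {x | ∃ r : ℝ, 0 < r ∧ τ i * ENNReal.ofReal (r ^ ((n : ℝ) - α * s)) <
          rieszCap n α s ({y | (2 : ℝ≥0∞) ^ ((k + (i - m) : ℤ) : ℝ) < g y} ∩ ball x r)} := by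
      intro x hx
      obtain ⟨i, r, hr, h⟩ := exists_density_of_lt_maximalCap hA h0 ht hm' hδΘ hx
      rw [sub_add_eq_add_sub, add_sub_assoc] at h
      exact mem_iUnion.2 ⟨i, r, hr, h⟩
    refine (rieszCap_mono hsub).trans ((rieszCap_iUnion_le hs _).trans ?_)
    exact ENNReal.tsum_le_tsum fun i => hK _ _ (hτ0 i) (hτt i)
  have hsum : ∑' k : ℤ, ((2 : ℝ≥0∞) ^ (k : ℝ)) ^ p *
      rieszCap n α s {x | (2 : ℝ≥0∞) ^ (k : ℝ) < maximalCap n α s g x} ≤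
      Q * ∑' k : ℤ, ((2 : ℝ≥0∞) ^ (k : ℝ)) ^ p * a k := by
    calc _ ≤ ∑' k : ℤ, ∑' i : ℕ,
          K * (1 + (τ i)⁻¹) * (((2 : ℝ≥0∞) ^ (k : ℝ)) ^ p * a (k + (i - m))) := by
          refine ENNReal.tsum_le_tsum fun k => (mul_le_mul_right (hlevel k) _).trans_eq ?_
          rw [← ENNReal.tsum_mul_left]
          exact tsum_congr fun i => mul_left_comm _ _ _
      _ = ∑' i : ℕ, K * (1 + (τ i)⁻¹) * 2 ^ (-(((i - m : ℤ) : ℝ) * p)) *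
          ∑' k : ℤ, ((2 : ℝ≥0∞) ^ (k : ℝ)) ^ p * a k := by
          rw [ENNReal.tsum_comm]
          refine tsum_congr fun i => ?_
          rw [ENNReal.tsum_mul_left, tsum_two_rpow_shift, ← mul_assoc]
      _ = _ := ENNReal.tsum_mul_right
  have hlow : ∑' k : ℤ, ((2 : ℝ≥0∞) ^ (k : ℝ)) ^ p * a k ≤
      κ⁻¹ * choquet (rieszCap n α s) (fun x => g x ^ p) := by
    rw [mul_comm, ← div_eq_mul_inv, ENNReal.le_div_iff_mul_le (Or.inl hκ0)
      (Or.inl ENNReal.ofReal_ne_top), mul_comm]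
    exact tsum_le_choquet_rpow hC hp0 g
  calc _ ≤ _ := choquet_rpow_le_tsum hC hp0 _
    _ ≤ ENNReal.ofReal (2 ^ p - 1) *
        (Q * (κ⁻¹ * choquet (rieszCap n α s) (fun x => g x ^ p))) := by
        gcongr
        exact hsum.trans (mul_le_mul_right hlow _)
    _ = _ := by ring

/-- Strong-type `(p,p)` bound for the Riesz capacitary maximal
function on `L^p(cap_{α,s})`, `1 < p < ∞`. -/
theorem statement17 (n : ℕ) (α s p : ℝ) (hα0 : 0 < α) (hαn : α < n)
    (hs1 : 1 < s) (hsn : s < n / α) (hp : 1 < p) :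
    ∃ C : ℝ, 0 < C ∧ ∀ f : Rn n → ℝ, MemChoquetLp (rieszCap n α s) p f →
      choquet (rieszCap n α s)
          (fun x => (maximalCap n α s (fun y => ENNReal.ofReal |f y|) x) ^ p) ≤
        ENNReal.ofReal C * choquet (rieszCap n α s) (fun x => ENNReal.ofReal |f x| ^ p) := by
  have hs0 : 0 < s := one_pos.trans hs1
  have hd : 0 < (n : ℝ) - α * s := by
    rw [lt_div_iff₀' hα0] at hsn
    linarith
  obtain ⟨K, hKt, hK⟩ := exists_choquet_maximalCap_le hα0 hαn hs0 hd hp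
  refine ⟨K.toReal + 1, by positivity, fun f _ => (hK _).trans (mul_le_mul_left ?_ _)⟩
  rw [ENNReal.le_ofReal_iff_toReal_le hKt (by positivity)]
  linarith

end
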